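/- arXiv:1703.01699 — 4 statements merged into one kernel-verified Lean document; each statement's English description precedes it below -/
import Mathlib

section
/- Let T > 0, ω ∈ ℝ, and let f : ℝ × ℝ × ℝⁿ → ℝⁿ be continuous and satisfy a Lipschitz condition in its third argument: there exists L > 0 such that ‖f(t,x,y) − f(t,x,z)‖_∞ ≤ L‖y − z‖_∞ for all t ∈ [0,T], x ∈ ℝ, y, z ∈ ℝⁿ. If y, z : [0,T] × ℝ → ℝⁿ are differentiable functions satisfying ∂y/∂t(t,x) + ω·∂y/∂x(t,x) = f(t, x, y(t,x)) and ∂z/∂t(t,x) + ω·∂z/∂x(t,x) = f(t, x, z(t,x)) for all (t,x) ∈ [0,T] × ℝ, and y(0,x) = z(0,x) for all x ∈ ℝ, then y(t,x) = z(t,x) for all (t,x) ∈ [0,T] × ℝ. -/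
/-- Uniqueness for the advection system with constant advection speed `ω`:
if `f` is continuous and Lipschitz in its third argument (max norm on `ℝⁿ`), and
`y`, `z` are differentiable solutions of `∂y/∂t + ω ∂y/∂x = f(t,x,y)` on `[0,T] × ℝ`
with the same initial data at `t = 0`, then `y = z` on `[0,T] × ℝ`. -/
theorem stmt_3 (n : ℕ) (T ω : ℝ) (hT : 0 < T)
    (f : ℝ → ℝ → (Fin n → ℝ) → (Fin n → ℝ))
    (hf_cont : Continuous fun p : ℝ × ℝ × (Fin n → ℝ) => f p.1 p.2.1 p.2.2)
    (L : ℝ) (hL : 0 < L)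
    (hf_lip : ∀ t ∈ Set.Icc (0 : ℝ) T, ∀ (x : ℝ) (w w' : Fin n → ℝ),
      ‖f t x w - f t x w'‖ ≤ L * ‖w - w'‖)
    (y z : ℝ × ℝ → (Fin n → ℝ))
    (hy_diff : ∀ t ∈ Set.Icc (0 : ℝ) T, ∀ x : ℝ, DifferentiableAt ℝ y (t, x))
    (hz_diff : ∀ t ∈ Set.Icc (0 : ℝ) T, ∀ x : ℝ, DifferentiableAt ℝ z (t, x))
    (hy_pde : ∀ t ∈ Set.Icc (0 : ℝ) T, ∀ x : ℝ,
      fderiv ℝ y (t, x) (1, ω) = f t x (y (t, x)))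
    (hz_pde : ∀ t ∈ Set.Icc (0 : ℝ) T, ∀ x : ℝ,
      fderiv ℝ z (t, x) (1, ω) = f t x (z (t, x)))
    (h0 : ∀ x : ℝ, y (0, x) = z (0, x)) :
    ∀ t ∈ Set.Icc (0 : ℝ) T, ∀ x : ℝ, y (t, x) = z (t, x) := by
  intro t ht x
  have key : ∀ u : ℝ × ℝ → (Fin n → ℝ),
      (∀ t ∈ Set.Icc (0 : ℝ) T, ∀ x : ℝ, DifferentiableAt ℝ u (t, x)) →
      (∀ t ∈ Set.Icc (0 : ℝ) T, ∀ x : ℝ, fderiv ℝ u (t, x) (1, ω) = f t x (u (t, x))) →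
      ∀ s ∈ Set.Icc (0 : ℝ) T, HasDerivAt (fun s => u (s, x - ω * t + ω * s))
        (f s (x - ω * t + ω * s) (u (s, x - ω * t + ω * s))) s := by
    intro u hu hp s hs
    have h1 : HasDerivAt (fun s : ℝ => (s, x - ω * t + ω * s)) ((1 : ℝ), ω) s := by
      have h2 : HasDerivAt (fun s : ℝ => x - ω * t + ω * s) ω s := by
        simpa using ((hasDerivAt_id s).const_mul ω).const_add (x - ω * t)
      exact (hasDerivAt_id s).prodMk h2
    have h3 := (hu s hs (x - ω * t + ω * s)).hasFDerivAt.comp_hasDerivAt s h1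
    rw [hp s hs] at h3
    exact h3
  have hY := key y hy_diff hy_pde
  have hZ := key z hz_diff hz_pde
  have := ODE_solution_unique_of_mem_Icc_right
    (v := fun s w => f s (x - ω * t + ω * s) w) (s := fun _ => Set.univ)
    (K := L.toNNReal) (a := 0) (b := T)
    (f := fun s => y (s, x - ω * t + ω * s)) (g := fun s => z (s, x - ω * t + ω * s))
    (fun s hs => (LipschitzWith.of_dist_le_mul (fun w w' => by
      rw [dist_eq_norm, dist_eq_norm, Real.coe_toNNReal L hL.le]
      exact hf_lip s (Set.Ico_subset_Icc_self hs) _ w w')).lipschitzOnWith)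
    (fun s hs => (hY s hs).continuousAt.continuousWithinAt)
    (fun s hs => (hY s (Set.Ico_subset_Icc_self hs)).hasDerivWithinAt)
    (fun _ _ => Set.mem_univ _)
    (fun s hs => (hZ s hs).continuousAt.continuousWithinAt)
    (fun s hs => (hZ s (Set.Ico_subset_Icc_self hs)).hasDerivWithinAt)
    (fun _ _ => Set.mem_univ _)
    (h0 _)
  simpa using this ht
end

section
/- Let T > 0, ω ∈ ℝ, let f : ℝ × ℝ × ℝⁿ → ℝⁿ be twice continuously differentiable with all partial derivatives up to order two bounded, and let y : [0,T] × ℝ → ℝⁿ be a three-times continuously differentiable solution of ∂y/∂t + ω·∂y/∂x = f(t, x, y(t,x)) on [0,T] × ℝ with all partial derivatives up to order three bounded. Then there exists a constant C ≥ 0 such that for all t, τ with 0 ≤ t ≤ t + τ ≤ T and all x ∈ ℝ, setting Y_D = y(t, x − ωτ), k₁ = f(t, x − ωτ, Y_D), and k₂ = f(t + τ, x, Y_D + τ·k₁), one has ‖y(t+τ, x) − Y_D − (τ/2)·(k₁ + k₂)‖_∞ ≤ C·τ³. In particular, the local truncation error of the modified semi-Lagrangian Euler method, i.e. this one-step error divided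 by τ, is O(τ²). -/
theorem aux_deriv {E F : Type*} [NormedAddCommGroup E] [NormedSpace ℝ E]
    [NormedAddCommGroup F] [NormedSpace ℝ F] (y : E → F) (hy : ContDiff ℝ 3 y) (p v : E)
    (k : ℕ) (hk : k < 3) (s : ℝ) :
    HasDerivAt (fun s : ℝ => iteratedFDeriv ℝ k y (p + s • v) (fun _ => v))
      (iteratedFDeriv ℝ (k + 1) y (p + s • v) (fun _ => v)) s := by
  have h1 : HasFDerivAt (iteratedFDeriv ℝ k y) (fderiv ℝ (iteratedFDeriv ℝ k y) (p + s • v))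
      (p + s • v) :=
    ((hy.differentiable_iteratedFDeriv (m := k) (by exact_mod_cast hk)) _).hasFDerivAt
  have h2 : HasDerivAt (fun s : ℝ => p + s • v) v s := by
    simpa using ((hasDerivAt_id s).smul_const v).const_add p
  have h3 := h1.comp_hasDerivAt s h2
  have h4 := ((ContinuousMultilinearMap.apply ℝ (fun _ : Fin k => E) F
    (fun _ => v)).hasFDerivAt).comp_hasDerivAt s h3
  rw [iteratedFDeriv_succ_apply_left]
  exact h4

theorem aux_mvt {F : Type*} [NormedAddCommGroup F] [NormedSpace ℝ F] (h h' : ℝ → F) (K τ : ℝ)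
    (hτ : 0 ≤ τ) (h0 : h 0 = 0) (hd : ∀ s, HasDerivAt h (h' s) s)
    (hb : ∀ s, 0 ≤ s → s ≤ τ → ‖h' s‖ ≤ K) : ‖h τ‖ ≤ K * τ := by
  have := norm_image_sub_le_of_norm_deriv_le_segment' (a := 0) (b := τ) (f := h) (f' := h') (C := K)
    (fun s _ => (hd s).hasDerivWithinAt) (fun s hs => hb s hs.1 hs.2.le) τ ⟨hτ, le_rfl⟩
  simpa [h0] using this

theorem aux_euler {F : Type*} [NormedAddCommGroup F] [NormedSpace ℝ F] (g g1 g2 : ℝ → F) (K τ : ℝ)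
    (hτ : 0 ≤ τ) (h1 : ∀ s, HasDerivAt g (g1 s) s) (h2 : ∀ s, HasDerivAt g1 (g2 s) s)
    (hb : ∀ s, ‖g2 s‖ ≤ K) : ‖g τ - (g 0 + τ • g1 0)‖ ≤ K * τ * τ := by
  have hK : 0 ≤ K := (norm_nonneg _).trans (hb 0)
  refine aux_mvt (fun s => g s - (g 0 + s • g1 0)) (fun s => g1 s - g1 0) _ τ hτ (by simp) ?_ ?_
  · intro s
    have h := (h1 s).sub (((hasDerivAt_id s).smul_const (g1 0)).const_add (g 0))
    rw [one_smul] at h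
    exact h
  · intro s hs hsτ
    refine (aux_mvt (fun s => g1 s - g1 0) g2 K s hs (by simp)
      (fun r => (h2 r).sub_const _) (fun r _ _ => hb r)).trans ?_
    gcongr

theorem aux_trap {F : Type*} [NormedAddCommGroup F] [NormedSpace ℝ F] (g g1 g2 g3 : ℝ → F)
    (K τ : ℝ)
    (hτ : 0 ≤ τ) (h1 : ∀ s, HasDerivAt g (g1 s) s) (h2 : ∀ s, HasDerivAt g1 (g2 s) s)
    (h3 : ∀ s, HasDerivAt g2 (g3 s) s)
    (hb : ∀ s, ‖g3 s‖ ≤ K) : ‖g τ - g 0 - (τ / 2) • (g1 0 + g1 τ)‖ ≤ τ / 2 * K * τ * τ := by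
  have hK : 0 ≤ K := (norm_nonneg _).trans (hb 0)
  have hd (s : ℝ) : HasDerivAt (fun s : ℝ => s / 2) (1 / 2) s := (hasDerivAt_id s).div_const 2
  refine aux_mvt (fun s => g s - g 0 - (s / 2) • (g1 0 + g1 s))
    (fun s => g1 s - ((s / 2) • g2 s + (1 / 2 : ℝ) • (g1 0 + g1 s))) _ τ hτ (by simp) ?_ ?_
  · intro s
    exact ((h1 s).sub_const _).sub ((hd s).smul ((h2 s).const_add _))
  · intro s hs hsτ
    refine (aux_mvt (fun s => g1 s - ((s / 2) • g2 s + (1 / 2 : ℝ) • (g1 0 + g1 s)))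
      (fun s => g2 s - (((s / 2) • g3 s + (1 / 2 : ℝ) • g2 s) + (1 / 2 : ℝ) • g2 s))
      (τ / 2 * K) s hs ?_ ?_ ?_).trans ?_
    · simp only [zero_div, zero_smul]
      module
    · intro r
      exact (h2 r).sub (((hd r).smul (h3 r)).add (((h2 r).const_add _).const_smul _))
    · intro r hr hrs
      have : g2 r - (((r / 2) • g3 r + (1 / 2 : ℝ) • g2 r) + (1 / 2 : ℝ) • g2 r)
        = -((r / 2) • g3 r) := by module
      rw [this, norm_neg, norm_smul, Real.norm_of_nonneg (by positivity)]
      have := hb r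
      gcongr
      linarith
    · gcongr

/-- Local truncation error of the modified semi-Lagrangian Euler method (Algorithm 2)
for constant advection speed `ω`: if `f` is `C²` with bounded derivatives up to order
two and `y` is a `C³` solution of `∂y/∂t + ω ∂y/∂x = f(t,x,y)` on `[0,T] × ℝ` with
bounded derivatives up to order three, then there is `C ≥ 0` such that the one-step
error of the trapezoidal (RK2) update along the characteristic is at most `Cτ³`;
i.e. the local truncation error is `O(τ²)`. -/
theorem stmt_11 (n : ℕ) (T ω : ℝ) (hT : 0 < T)
    (f : ℝ → ℝ → (Fin n → ℝ) → (Fin n → ℝ))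
    (hf : ContDiff ℝ 2 fun p : ℝ × ℝ × (Fin n → ℝ) => f p.1 p.2.1 p.2.2)
    (hfb : ∃ B : ℝ, ∀ j : ℕ, 1 ≤ j → j ≤ 2 → ∀ p : ℝ × ℝ × (Fin n → ℝ),
      ‖iteratedFDeriv ℝ j (fun q : ℝ × ℝ × (Fin n → ℝ) => f q.1 q.2.1 q.2.2) p‖ ≤ B)
    (y : ℝ × ℝ → (Fin n → ℝ))
    (hy : ContDiff ℝ 3 y)
    (hyb : ∃ B : ℝ, ∀ j : ℕ, 1 ≤ j → j ≤ 3 → ∀ p : ℝ × ℝ,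
      ‖iteratedFDeriv ℝ j y p‖ ≤ B)
    (hpde : ∀ t ∈ Set.Icc (0 : ℝ) T, ∀ x : ℝ,
      fderiv ℝ y (t, x) (1, ω) = f t x (y (t, x))) :
    ∃ C : ℝ, 0 ≤ C ∧ ∀ (t τ x : ℝ), 0 ≤ t → 0 ≤ τ → t + τ ≤ T →
      let YD := y (t, x - ω * τ)
      let k₁ := f t (x - ω * τ) YD
      let k₂ := f (t + τ) x (YD + τ • k₁)
      ‖y (t + τ, x) - YD - (τ / 2) • (k₁ + k₂)‖ ≤ C * τ ^ 3 := by
  obtain ⟨B, hB⟩ := hfb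
  obtain ⟨M, hM⟩ := hyb
  have hB0 : 0 ≤ B := (norm_nonneg _).trans (hB 1 le_rfl (by norm_num) 0)
  have hM0 : 0 ≤ M := (norm_nonneg _).trans (hM 1 le_rfl (by norm_num) 0)
  have hlip : ∀ p q : ℝ × ℝ × (Fin n → ℝ),
      ‖f q.1 q.2.1 q.2.2 - f p.1 p.2.1 p.2.2‖ ≤ B * ‖q - p‖ := by
    intro p q
    refine Convex.norm_image_sub_le_of_norm_fderiv_le (𝕜 := ℝ) (s := Set.univ)
      (f := fun p : ℝ × ℝ × (Fin n → ℝ) => f p.1 p.2.1 p.2.2)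
      (fun x _ => (hf.differentiable (by norm_num)) x) (fun x _ => ?_) convex_univ
      (Set.mem_univ _) (Set.mem_univ _)
    rw [← norm_iteratedFDeriv_one]
    exact hB 1 le_rfl (by norm_num) x
  set v : ℝ × ℝ := (1, ω) with hv
  refine ⟨M * ‖v‖ ^ 3 / 2 + B * (M * ‖v‖ ^ 2) / 2, by positivity, ?_⟩
  intro t τ x ht hτ htT YD k₁ k₂
  set p : ℝ × ℝ := (t, x - ω * τ) with hp
  let G : ℕ → ℝ → (Fin n → ℝ) := fun k s => iteratedFDeriv ℝ k y (p + s • v) (fun _ => v)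
  have hG : ∀ k, k < 3 → ∀ s, HasDerivAt (G k) (G (k + 1) s) s :=
    fun k hk s => aux_deriv y hy p v k hk s
  have hGb : ∀ k, 1 ≤ k → k ≤ 3 → ∀ s, ‖G k s‖ ≤ M * ‖v‖ ^ k := by
    intro k h1 h3 s
    refine (ContinuousMultilinearMap.le_opNorm _ _).trans ?_
    simp only [Finset.prod_const, Finset.card_univ, Fintype.card_fin]
    gcongr
    exact hM k h1 h3 _
  have e0 : p + (0 : ℝ) • v = (t, x - ω * τ) := by simp [hp]
  have eτ : p + τ • v = (t + τ, x) := by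
    simp only [hp, hv, Prod.smul_mk, Prod.mk_add_mk, smul_eq_mul, Prod.mk.injEq]
    constructor <;> ring
  have g00 : G 0 0 = YD := by simp [G, YD, hp]
  have g0τ : G 0 τ = y (t + τ, x) := by simp [G, eτ]
  have g10 : G 1 0 = k₁ := by
    simp only [G, iteratedFDeriv_one_apply, e0]
    exact hpde t ⟨ht, by linarith⟩ _
  have g1τ : G 1 τ = f (t + τ) x (y (t + τ, x)) := by
    simp only [G, iteratedFDeriv_one_apply, eτ]
    exact hpde (t + τ) ⟨by linarith, htT⟩ _
  have E := aux_euler (G 0) (G 1) (G 2) _ τ hτ (hG 0 (by norm_num)) (hG 1 (by norm_num))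
    (hGb 2 (by norm_num) (by norm_num))
  have R := aux_trap (G 0) (G 1) (G 2) (G 3) _ τ hτ (hG 0 (by norm_num)) (hG 1 (by norm_num))
    (hG 2 (by norm_num)) (hGb 3 (by norm_num) (by norm_num))
  rw [g00, g0τ, g10] at E R
  rw [g1τ] at R
  have L : ‖f (t + τ) x (y (t + τ, x)) - k₂‖ ≤ B * (M * ‖v‖ ^ 2 * τ * τ) := by
    refine (hlip (t + τ, x, YD + τ • k₁) (t + τ, x, y (t + τ, x))).trans ?_
    gcongr
    refine le_trans (le_of_eq ?_) E
    simp [Prod.norm_def]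
  have split : y (t + τ, x) - YD - (τ / 2) • (k₁ + k₂)
      = (y (t + τ, x) - YD - (τ / 2) • (k₁ + f (t + τ) x (y (t + τ, x))))
        + (τ / 2) • (f (t + τ) x (y (t + τ, x)) - k₂) := by module
  rw [split]
  refine (norm_add_le _ _).trans ?_
  rw [norm_smul, Real.norm_of_nonneg (by positivity : 0 ≤ τ / 2)]
  have L2 := mul_le_mul_of_nonneg_left L (by positivity : 0 ≤ τ / 2)
  refine (add_le_add R L2).trans (le_of_eq ?_)
  ring
end

section
/- Let T > 0, ω ∈ ℝ, let f : ℝ × ℝ × ℝⁿ → ℝⁿ be three-times continuously differentiable with all partial derivatives up to order three bounded, and let y : [0,T] × ℝ → ℝⁿ be a four-times continuously differentiable solution of ∂y/∂t + ω·∂y/∂x = f(t, x, y(t,x)) on [0,T] × ℝ with all partial derivatives up to order four bounded. Then there exists a constant C ≥ 0 such that for all t, τ with 0 ≤ t ≤ t + τ ≤ T and all x ∈ ℝ, setting Y_D = y(t, x − ωτ), k₁ = f(t, x − ωτ, Y_D), k₂ = f(t + τ/2, x − ωτ/2, Y_D + (τ/2)·k₁), and k₃ = f(t + τ, x, Y_D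 − τ·k₁ + 2τ·k₂), one has ‖y(t+τ, x) − Y_D − (τ/6)·(k₁ + 4k₂ + k₃)‖_∞ ≤ C·τ⁴. In particular, the local truncation error of the semi-Lagrangian Runge–Kutta order-3 method, i.e. this one-step error divided by τ, is O(τ³). -/
set_option maxHeartbeats 1000000 in
theorem aux_kutta {V : Type*} [NormedAddCommGroup V] [NormedSpace ℝ V] (M L T : ℝ)
    (hM : 0 ≤ M) (hL : 0 ≤ L) (hT : 0 ≤ T) :
    ∃ C : ℝ, 0 ≤ C ∧ ∀ (G : V → V) (D : V →L[ℝ] V) (h : ℝ) (z0 zm z1 Z1 Z2 gm g1 : V),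
      0 ≤ h → h ≤ T → ‖Z1‖ ≤ M → ‖Z2‖ ≤ M → ‖D‖ ≤ L →
      (∀ a b, ‖G b - G a‖ ≤ L * ‖b - a‖) →
      (∀ a b, ‖G b - G a - D (b - a)‖ ≤ L * (‖a - z0‖ + ‖b - z0‖) * ‖b - a‖) →
      G z0 = Z1 → G zm = gm → G z1 = g1 →
      ‖zm - z0 - (h / 2) • Z1 - (h ^ 2 / 8) • Z2‖ ≤ M * h ^ 3 →
      ‖z1 - z0 - h • Z1 - (h ^ 2 / 2) • Z2‖ ≤ M * h ^ 3 →
      ‖gm - Z1 - (h / 2) • Z2‖ ≤ M * h ^ 2 →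
      ‖z1 - z0 - (h / 6) • (Z1 + (4 : ℝ) • gm + g1)‖ ≤ M * h ^ 4 →
      ‖z1 - z0 - (h / 6) • (Z1 + (4 : ℝ) • G (z0 + (h / 2) • Z1)
        + G (z0 - h • Z1 + (2 * h) • G (z0 + (h / 2) • Z1)))‖ ≤ C * h ^ 4 := by
  obtain ⟨P, hP⟩ : ∃ P, P = M * (T + 1) := ⟨_, rfl⟩
  obtain ⟨Q, hQ⟩ : ∃ Q, Q = 2 * (L * P) + 3 * M := ⟨_, rfl⟩
  obtain ⟨R, hR⟩ : ∃ R, R = Q * T + M := ⟨_, rfl⟩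
  obtain ⟨S, hS⟩ : ∃ S, S = L * ((P * T + M) + M) * P := ⟨_, rfl⟩
  obtain ⟨U, hU⟩ : ∃ U, U = L * ((P * T + M) + (R * T + P * T + M)) * R := ⟨_, rfl⟩
  have hP0 : 0 ≤ P := by rw [hP]; positivity
  have hQ0 : 0 ≤ Q := by rw [hQ]; positivity
  have hR0 : 0 ≤ R := by rw [hR]; positivity
  have hS0 : 0 ≤ S := by rw [hS]; positivity
  have hU0 : 0 ≤ U := by rw [hU]; positivity
  refine ⟨M + (4 * S + U + L * (4 * M) + L * Q), by positivity, ?_⟩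
  intro G D h z0 zm z1 Z1 Z2 gm g1 h0 hhT hZ1 hZ2 hD hG1 hG2 e0 em e1 t1 t2 t3 t4
  have p2 : h ^ 2 ≤ T * h := by nlinarith
  have p3 : h ^ 3 ≤ T * h ^ 2 := by nlinarith [sq_nonneg h]
  set K2 := G (z0 + (h / 2) • Z1) with hK2
  set K3 := G (z0 - h • Z1 + (2 * h) • K2) with hK3
  have s1 : ‖h • Z1‖ ≤ M * h := by
    rw [norm_smul, Real.norm_of_nonneg h0]; nlinarith
  have s1' : ‖(h / 2) • Z1‖ ≤ M * h := by
    rw [norm_smul, Real.norm_of_nonneg (by positivity)]; nlinarith [norm_nonneg Z1]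
  have s2 : ‖(h ^ 2 / 2) • Z2‖ ≤ M * h ^ 2 := by
    rw [norm_smul, Real.norm_of_nonneg (by positivity)]; nlinarith [norm_nonneg Z2, sq_nonneg h]
  have s2' : ‖(h ^ 2 / 8) • Z2‖ ≤ M * h ^ 2 := by
    rw [norm_smul, Real.norm_of_nonneg (by positivity)]; nlinarith [norm_nonneg Z2, sq_nonneg h]
  obtain ⟨e2, he2⟩ : ∃ e2, e2 = z0 + (h / 2) • Z1 - zm := ⟨_, rfl⟩
  obtain ⟨e3, he3⟩ : ∃ e3, e3 = z0 - h • Z1 + (2 * h) • K2 - z1 := ⟨_, rfl⟩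
  have a1 : ‖e2 + (h ^ 2 / 8) • Z2‖ ≤ M * h ^ 3 := by
    have : e2 + (h ^ 2 / 8) • Z2 = -(zm - z0 - (h / 2) • Z1 - (h ^ 2 / 8) • Z2) := by
      rw [he2]; module
    rw [this, norm_neg]; exact t1
  have hMp3 : M * h ^ 3 ≤ M * (T * h ^ 2) := mul_le_mul_of_nonneg_left p3 hM
  have hPe : P * h ^ 2 = M * (T * h ^ 2) + M * h ^ 2 := by rw [hP]; ring
  have hPh : P * h ^ 2 ≤ P * (T * h) := by gcongr
  have a2 : ‖e2‖ ≤ P * h ^ 2 := by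
    have := norm_sub_le (e2 + (h ^ 2 / 8) • Z2) ((h ^ 2 / 8) • Z2)
    rw [add_sub_cancel_right] at this
    linarith
  have hz1 : ‖z1 - z0‖ ≤ (P * T + M) * h := by
    have q1 := norm_add_le (z1 - z0 - h • Z1 - (h ^ 2 / 2) • Z2) ((h ^ 2 / 2) • Z2)
    have q2 := norm_add_le (z1 - z0 - h • Z1) (h • Z1)
    rw [sub_add_cancel] at q1 q2
    linarith
  have hzm : ‖zm - z0‖ ≤ (P * T + M) * h := by
    have q1 := norm_sub_le ((h / 2) • Z1) e2
    have : (h / 2) • Z1 - e2 = zm - z0 := by rw [he2]; module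
    rw [this] at q1
    linarith
  have d2 : ‖K2 - gm‖ ≤ L * P * h ^ 2 := by
    have := hG1 zm (z0 + (h / 2) • Z1)
    rw [em, ← he2, ← hK2] at this
    linarith [mul_le_mul_of_nonneg_left a2 hL]
  have d2' : ‖K2 - gm - D e2‖ ≤ S * h ^ 3 := by
    have := hG2 zm (z0 + (h / 2) • Z1)
    rw [em, ← he2, ← hK2, add_sub_cancel_left] at this
    calc _ ≤ _ := this
      _ ≤ L * ((P * T + M) * h + M * h) * (P * h ^ 2) := by gcongr
      _ = S * h ^ 3 := by rw [hS]; ring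
  have b1 : ‖e3 - (h ^ 2 / 2) • Z2‖ ≤ Q * h ^ 3 := by
    have : e3 - (h ^ 2 / 2) • Z2 = (2 * h) • (K2 - gm) + (2 * h) • (gm - Z1 - (h / 2) • Z2)
      - (z1 - z0 - h • Z1 - (h ^ 2 / 2) • Z2) := by rw [he3]; module
    rw [this]
    refine (norm_sub_le _ _).trans ?_
    have q := norm_add_le ((2 * h) • (K2 - gm)) ((2 * h) • (gm - Z1 - (h / 2) • Z2))
    rw [norm_smul (2 * h) (K2 - gm), norm_smul (2 * h) (gm - Z1 - (h / 2) • Z2),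
      Real.norm_of_nonneg (by positivity : 0 ≤ 2 * h)] at q
    have q1 := mul_le_mul_of_nonneg_left d2 (by positivity : 0 ≤ 2 * h)
    have q2 := mul_le_mul_of_nonneg_left t3 (by positivity : 0 ≤ 2 * h)
    rw [hQ]; linarith
  have b2 : ‖e3‖ ≤ R * h ^ 2 := by
    have := norm_add_le (e3 - (h ^ 2 / 2) • Z2) ((h ^ 2 / 2) • Z2)
    rw [sub_add_cancel] at this
    rw [hR]; linarith [mul_le_mul_of_nonneg_left p3 hQ0]
  have hb3 : ‖z0 - h • Z1 + (2 * h) • K2 - z0‖ ≤ (R * T + P * T + M) * h := by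
    have : z0 - h • Z1 + (2 * h) • K2 - z0 = e3 + (z1 - z0) := by rw [he3]; module
    rw [this]
    have := norm_add_le e3 (z1 - z0)
    linarith [mul_le_mul_of_nonneg_left p2 hR0]
  have d3' : ‖K3 - g1 - D e3‖ ≤ U * h ^ 3 := by
    have := hG2 z1 (z0 - h • Z1 + (2 * h) • K2)
    rw [e1, ← he3, ← hK3] at this
    calc _ ≤ _ := this
      _ ≤ L * ((P * T + M) * h + (R * T + P * T + M) * h) * (R * h ^ 2) := by gcongr
      _ = U * h ^ 3 := by rw [hU]; ring
  have c1 : ‖D (e2 + (h ^ 2 / 8) • Z2)‖ ≤ L * (M * h ^ 3) :=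
    (D.le_opNorm _).trans (by gcongr)
  have c2 : ‖D (e3 - (h ^ 2 / 2) • Z2)‖ ≤ L * (Q * h ^ 3) :=
    (D.le_opNorm _).trans (by gcongr)
  have key : ‖(4 : ℝ) • (K2 - gm) + (K3 - g1)‖ ≤
      (4 * S + U + L * (4 * M) + L * Q) * h ^ 3 := by
    have : (4 : ℝ) • (K2 - gm) + (K3 - g1) = (4 : ℝ) • (K2 - gm - D e2) + (K3 - g1 - D e3)
      + (4 : ℝ) • D (e2 + (h ^ 2 / 8) • Z2) + D (e3 - (h ^ 2 / 2) • Z2) := by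
      simp only [map_add, map_sub, map_smul]; module
    rw [this]
    refine (norm_add₄_le).trans ?_
    rw [norm_smul, norm_smul, Real.norm_of_nonneg (by norm_num : (0:ℝ) ≤ 4)]
    linarith
  have : z1 - z0 - (h / 6) • (Z1 + (4 : ℝ) • K2 + K3) =
    (z1 - z0 - (h / 6) • (Z1 + (4 : ℝ) • gm + g1))
     - (h / 6) • ((4 : ℝ) • (K2 - gm) + (K3 - g1)) := by module
  rw [this]
  refine (norm_sub_le _ _).trans ?_
  rw [norm_smul, Real.norm_of_nonneg (by positivity : 0 ≤ h / 6)]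
  have k2 := mul_le_mul_of_nonneg_left key (by positivity : 0 ≤ h / 6)
  obtain ⟨X, hX⟩ : ∃ X, X = 4 * S + U + L * (4 * M) + L * Q := ⟨_, rfl⟩
  have k3 : 0 ≤ X * h ^ 4 := by rw [hX]; positivity
  rw [← hX] at k2 ⊢
  linarith

theorem aux_mv {E : Type*} [NormedAddCommGroup E] [NormedSpace ℝ E] (g g' : ℝ → E) (M : ℝ) (k : ℕ)
    (hM : 0 ≤ M) (hg : ∀ s, HasDerivAt g (g' s) s) (h0 : g 0 = 0)
    (hb : ∀ s, 0 ≤ s → ‖g' s‖ ≤ M * s ^ k) : ∀ s, 0 ≤ s → ‖g s‖ ≤ M * s ^ (k + 1) := by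
  intro s hs
  have := norm_image_sub_le_of_norm_deriv_le_segment' (f := g) (f' := g') (a := 0) (b := s)
    (C := M * s ^ k) (fun x _ => (hg x).hasDerivWithinAt)
    (fun x hx => (hb x hx.1).trans (by have := hx.1; have := hx.2.le; gcongr)) s ⟨hs, le_rfl⟩
  rw [h0, sub_zero, sub_zero] at this
  rw [pow_succ]; linarith

theorem aux_taylor2 {E : Type*} [NormedAddCommGroup E] [NormedSpace ℝ E] (u u1 u2 : ℝ → E) (M : ℝ)
    (hM : 0 ≤ M) (h0 : ∀ s, HasDerivAt u (u1 s) s) (h1 : ∀ s, HasDerivAt u1 (u2 s) s)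
    (hb : ∀ s, ‖u2 s‖ ≤ M) (s : ℝ) (hs : 0 ≤ s) :
    ‖u s - u 0 - s • u1 0‖ ≤ M * s ^ 2 := by
  have A := aux_mv (fun s => u1 s - u1 0) u2 M 0 hM (fun s => (h1 s).sub_const _) (by simp)
    (fun s _ => by simpa using hb s)
  refine aux_mv (fun s => u s - u 0 - s • u1 0) (fun s => u1 s - u1 0) M 1 hM (fun s => ?_)
    (by simp) A s hs
  have := ((h0 s).sub_const (u 0)).fun_sub ((hasDerivAt_id' s).smul_const (u1 0))
  simpa using this

theorem aux_taylor3 {E : Type*} [NormedAddCommGroup E] [NormedSpace ℝ E] (u u1 u2 u3 : ℝ → E)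
    (M : ℝ) (hM : 0 ≤ M) (h0 : ∀ s, HasDerivAt u (u1 s) s) (h1 : ∀ s, HasDerivAt u1 (u2 s) s)
    (h2 : ∀ s, HasDerivAt u2 (u3 s) s)
    (hb : ∀ s, ‖u3 s‖ ≤ M) (s : ℝ) (hs : 0 ≤ s) :
    ‖u s - u 0 - s • u1 0 - (s ^ 2 / 2) • u2 0‖ ≤ M * s ^ 3 := by
  have A := aux_taylor2 u1 u2 u3 M hM h1 h2 hb
  refine aux_mv (fun s => u s - u 0 - s • u1 0 - (s ^ 2 / 2) • u2 0)
    (fun s => u1 s - u1 0 - s • u2 0) M 2 hM (fun s => ?_) (by simp) A s hs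
  have := (((h0 s).sub_const (u 0)).fun_sub ((hasDerivAt_id' s).smul_const (u1 0))).fun_sub
    (((hasDerivAt_pow 2 s).div_const 2).smul_const (u2 0))
  simpa using this

theorem aux_taylor4 {E : Type*} [NormedAddCommGroup E] [NormedSpace ℝ E] (u u1 u2 u3 u4 : ℝ → E)
    (M : ℝ) (hM : 0 ≤ M) (h0 : ∀ s, HasDerivAt u (u1 s) s) (h1 : ∀ s, HasDerivAt u1 (u2 s) s)
    (h2 : ∀ s, HasDerivAt u2 (u3 s) s) (h3 : ∀ s, HasDerivAt u3 (u4 s) s)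
    (hb : ∀ s, ‖u4 s‖ ≤ M) (s : ℝ) (hs : 0 ≤ s) :
    ‖u s - u 0 - s • u1 0 - (s ^ 2 / 2) • u2 0 - (s ^ 3 / 6) • u3 0‖ ≤ M * s ^ 4 := by
  have A := aux_taylor3 u1 u2 u3 u4 M hM h1 h2 h3 hb
  refine aux_mv (fun s => u s - u 0 - s • u1 0 - (s ^ 2 / 2) • u2 0 - (s ^ 3 / 6) • u3 0)
    (fun s => u1 s - u1 0 - s • u2 0 - (s ^ 2 / 2) • u3 0) M 3 hM (fun s => ?_) (by simp) A s hs
  have := ((((h0 s).sub_const (u 0)).fun_sub ((hasDerivAt_id' s).smul_const (u1 0))).fun_sub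
    (((hasDerivAt_pow 2 s).div_const 2).smul_const (u2 0))).fun_sub
    (((hasDerivAt_pow 3 s).div_const 6).smul_const (u3 0))
  refine this.congr_deriv ?_
  simp only [Nat.cast_ofNat, Nat.reduceSub]
  module

theorem aux_simpson {E : Type*} [NormedAddCommGroup E] [NormedSpace ℝ E] (u u1 u2 u3 u4 : ℝ → E)
    (M : ℝ) (hM : 0 ≤ M) (h0 : ∀ s, HasDerivAt u (u1 s) s) (h1 : ∀ s, HasDerivAt u1 (u2 s) s)
    (h2 : ∀ s, HasDerivAt u2 (u3 s) s) (h3 : ∀ s, HasDerivAt u3 (u4 s) s)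
    (hb : ∀ s, ‖u4 s‖ ≤ M) (h : ℝ) (hs : 0 ≤ h) :
    ‖u h - u 0 - (h / 6) • (u1 0 + (4 : ℝ) • u1 (h / 2) + u1 h)‖ ≤ 2 * M * h ^ 4 := by
  have A := aux_taylor4 u u1 u2 u3 u4 M hM h0 h1 h2 h3 hb h hs
  have B := aux_taylor3 u1 u2 u3 u4 M hM h1 h2 h3 hb h hs
  have C := aux_taylor3 u1 u2 u3 u4 M hM h1 h2 h3 hb (h / 2) (by positivity)
  set a := u h - u 0 - h • u1 0 - (h ^ 2 / 2) • u2 0 - (h ^ 3 / 6) • u3 0 with ha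
  set b := u1 h - u1 0 - h • u2 0 - (h ^ 2 / 2) • u3 0 with hb
  set c := u1 (h / 2) - u1 0 - (h / 2) • u2 0 - ((h / 2) ^ 2 / 2) • u3 0 with hc
  have : u h - u 0 - (h / 6) • (u1 0 + (4 : ℝ) • u1 (h / 2) + u1 h)
    = a - (h / 6) • b - (4 * h / 6) • c := by rw [ha, hb, hc]; module
  rw [this]
  have q1 := norm_sub_le (a - (h / 6) • b) ((4 * h / 6) • c)
  have q2 := norm_sub_le a ((h / 6) • b)
  rw [norm_smul, Real.norm_of_nonneg (by positivity)] at q1 q2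
  have r1 := mul_le_mul_of_nonneg_left B (by positivity : 0 ≤ h / 6)
  have r2 := mul_le_mul_of_nonneg_left C (by positivity : 0 ≤ 4 * h / 6)
  have : 0 ≤ M * h ^ 4 := by positivity
  nlinarith

theorem aux_quad {V E : Type*} [NormedAddCommGroup V] [NormedSpace ℝ V] [NormedAddCommGroup E]
    [NormedSpace ℝ E] (F : V → E) (B : ℝ) (hF : ContDiff ℝ 3 F)
    (hb : ∀ j : ℕ, 1 ≤ j → j ≤ 3 → ∀ p, ‖iteratedFDeriv ℝ j F p‖ ≤ B) :
    (∀ p, ‖fderiv ℝ F p‖ ≤ B) ∧ (∀ a b, ‖F b - F a‖ ≤ B * ‖b - a‖) ∧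
    ∀ z a b, ‖F b - F a - fderiv ℝ F z (b - a)‖ ≤ B * (‖a - z‖ + ‖b - z‖) * ‖b - a‖ := by
  have h1 : ∀ p, ‖fderiv ℝ F p‖ ≤ B := fun p => by
    rw [← norm_iteratedFDeriv_one]; exact hb 1 (by norm_num) (by norm_num) p
  have hB : 0 ≤ B := (norm_nonneg _).trans (h1 0)
  have h2 : ∀ p, ‖fderiv ℝ (fderiv ℝ F) p‖ ≤ B := fun p => by
    rw [← norm_iteratedFDeriv_one, norm_iteratedFDeriv_fderiv]
    exact hb 2 (by norm_num) (by norm_num) p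
  have dF : Differentiable ℝ F := hF.differentiable (by norm_num)
  have dF' : Differentiable ℝ (fderiv ℝ F) :=
    (hF.fderiv_right (m := 2) (by norm_num)).differentiable (by norm_num)
  refine ⟨h1, fun a b => ?_, fun z a b => ?_⟩
  · exact convex_univ.norm_image_sub_le_of_norm_fderiv_le (fun x _ => dF x) (fun x _ => h1 x)
      (Set.mem_univ _) (Set.mem_univ _)
  · refine (convex_closedBall z (‖a - z‖ + ‖b - z‖)).norm_image_sub_le_of_norm_fderiv_le'
      (fun x _ => dF x) (fun x hx => ?_) ?_ ?_
    · have := convex_univ.norm_image_sub_le_of_norm_fderiv_le (fun x _ => dF' x) (fun x _ => h2 x)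
        (Set.mem_univ z) (Set.mem_univ x)
      rw [mem_closedBall_iff_norm] at hx
      exact this.trans (by gcongr)
    · rw [mem_closedBall_iff_norm]; linarith [norm_nonneg (b - z)]
    · rw [mem_closedBall_iff_norm]; linarith [norm_nonneg (a - z)]

theorem aux_line {W E : Type*} [NormedAddCommGroup W] [NormedSpace ℝ W] [NormedAddCommGroup E]
    [NormedSpace ℝ E] (y : W → E) (B : ℝ) (hy : ContDiff ℝ 4 y)
    (hb : ∀ j : ℕ, 1 ≤ j → j ≤ 4 → ∀ p, ‖iteratedFDeriv ℝ j y p‖ ≤ B) (p v : W) :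
    (∀ s, HasDerivAt (fun s : ℝ => y (p + s • v)) (fderiv ℝ y (p + s • v) v) s) ∧
    ContDiff ℝ 4 (fun s : ℝ => y (p + s • v)) ∧
    ∀ j : ℕ, 1 ≤ j → j ≤ 4 → ∀ s, ‖iteratedDeriv j (fun s : ℝ => y (p + s • v)) s‖
      ≤ B * (1 + ‖v‖) ^ 4 := by
  refine ⟨fun s => ?_, by fun_prop, fun j h1 h4 s => ?_⟩
  · have h1 : HasDerivAt (fun s : ℝ => p + s • v) v s := by
      simpa using ((hasDerivAt_id' s).smul_const v).const_add p
    exact ((hy.differentiable (by norm_num)) _).hasFDerivAt.comp_hasDerivAt s h1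
  · have hB : 0 ≤ B := (norm_nonneg _).trans (hb 1 (by norm_num) (by norm_num) p)
    rw [← norm_iteratedFDeriv_eq_norm_iteratedDeriv]
    set l : ℝ →L[ℝ] W := (ContinuousLinearMap.id ℝ ℝ).smulRight v with hl
    have : (fun s : ℝ => y (p + s • v)) = (fun w => y (p + w)) ∘ l := by
      ext s; simp [hl]
    have hc : ContDiff ℝ 4 (fun w => y (p + w)) := by fun_prop
    rw [this, l.iteratedFDeriv_comp_right hc s (by exact_mod_cast h4), iteratedFDeriv_comp_add_left]
    refine (ContinuousMultilinearMap.norm_compContinuousLinearMap_le _ _).trans ?_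
    have hln : ‖l‖ ≤ 1 + ‖v‖ := by
      rw [hl, ContinuousLinearMap.norm_smulRight_apply]; simp
    have : ∏ i : Fin j, ‖l‖ ≤ (1 + ‖v‖) ^ 4 := by
      rw [Finset.prod_const, Finset.card_univ, Fintype.card_fin]
      calc ‖l‖ ^ j ≤ (1 + ‖v‖) ^ j := by gcongr
        _ ≤ _ := pow_le_pow_right₀ (by linarith [norm_nonneg v]) h4
    exact mul_le_mul (hb j h1 h4 _) this (by positivity) hB


/-- Local truncation error of the semi-Lagrangian Runge–Kutta order-3 method
(Algorithm 3) for constant advection speed `ω`: if `f` is `C³` with bounded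
derivatives up to order three and `y` is a `C⁴` solution of
`∂y/∂t + ω ∂y/∂x = f(t,x,y)` on `[0,T] × ℝ` with bounded derivatives up to order
four, then there is `C ≥ 0` such that the one-step error of Kutta's third-order
step along the characteristic is at most `Cτ⁴`; i.e. the local truncation error is
`O(τ³)`. -/
theorem stmt_12 (n : ℕ) (T ω : ℝ) (hT : 0 < T)
    (f : ℝ → ℝ → (Fin n → ℝ) → (Fin n → ℝ))
    (hf : ContDiff ℝ 3 fun p : ℝ × ℝ × (Fin n → ℝ) => f p.1 p.2.1 p.2.2)
    (hfb : ∃ B : ℝ, ∀ j : ℕ, 1 ≤ j → j ≤ 3 → ∀ p : ℝ × ℝ × (Fin n → ℝ),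
      ‖iteratedFDeriv ℝ j (fun q : ℝ × ℝ × (Fin n → ℝ) => f q.1 q.2.1 q.2.2) p‖ ≤ B)
    (y : ℝ × ℝ → (Fin n → ℝ))
    (hy : ContDiff ℝ 4 y)
    (hyb : ∃ B : ℝ, ∀ j : ℕ, 1 ≤ j → j ≤ 4 → ∀ p : ℝ × ℝ,
      ‖iteratedFDeriv ℝ j y p‖ ≤ B)
    (hpde : ∀ t ∈ Set.Icc (0 : ℝ) T, ∀ x : ℝ,
      fderiv ℝ y (t, x) (1, ω) = f t x (y (t, x))) :
    ∃ C : ℝ, 0 ≤ C ∧ ∀ (t τ x : ℝ), 0 ≤ t → 0 ≤ τ → t + τ ≤ T →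
      let YD := y (t, x - ω * τ)
      let k₁ := f t (x - ω * τ) YD
      let k₂ := f (t + τ / 2) (x - ω * τ / 2) (YD + (τ / 2) • k₁)
      let k₃ := f (t + τ) x (YD - τ • k₁ + (2 * τ) • k₂)
      ‖y (t + τ, x) - YD - (τ / 6) • (k₁ + (4 : ℝ) • k₂ + k₃)‖ ≤ C * τ ^ 4 := by
  obtain ⟨B, hB⟩ := hfb
  obtain ⟨B', hB'⟩ := hyb
  obtain ⟨q1, q2, q3⟩ := aux_quad _ B hf hB
  have hB0 : 0 ≤ B := (norm_nonneg _).trans (q1 0)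
  have hB0' : 0 ≤ B' := (norm_nonneg _).trans (hB' 1 (by norm_num) (by norm_num) 0)
  set F : ℝ × ℝ × (Fin n → ℝ) → (Fin n → ℝ) := fun p => f p.1 p.2.1 p.2.2 with hF
  obtain ⟨N, hN⟩ : ∃ N, N = B' * (1 + ‖((1 : ℝ), ω)‖) ^ 4 := ⟨_, rfl⟩
  have hN0 : 0 ≤ N := by rw [hN]; positivity
  obtain ⟨C, hC0, hC⟩ := aux_kutta (V := ℝ × ℝ × (Fin n → ℝ)) (2 * N + 1 + |ω|) B T
    (by positivity) hB0 hT.le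
  refine ⟨C, hC0, ?_⟩
  intro t τ x ht hτ htT
  dsimp only
  obtain ⟨l1, l2, l3⟩ := aux_line y B' hy hB' (t, x - ω * τ) (1, ω)
  rw [← hN] at l3
  set u : ℝ → (Fin n → ℝ) := fun s => y ((t, x - ω * τ) + s • ((1 : ℝ), ω)) with hu
  have hus : ∀ s, u s = y (t + s, x - ω * τ + s * ω) := fun s => by simp [hu]
  have ch : ∀ j : ℕ, j < 4 → ∀ s, HasDerivAt (iteratedDeriv j u) (iteratedDeriv (j + 1) u s) s := by
    intro j hj s
    rw [iteratedDeriv_succ]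
    exact (l2.differentiable_iteratedDeriv j (by exact_mod_cast hj) s).hasDerivAt
  have c0 := ch 0 (by norm_num)
  rw [iteratedDeriv_zero] at c0
  have c1 := ch 1 (by norm_num)
  have c2 := ch 2 (by norm_num)
  have c3 := ch 3 (by norm_num)
  have hder : ∀ s, 0 ≤ s → s ≤ τ → iteratedDeriv 1 u s = F (t + s, x - ω * τ + s * ω, u s) := by
    intro s h0 h1
    rw [(c0 s).unique (l1 s)]
    have := hpde (t + s) ⟨by linarith, by linarith⟩ (x - ω * τ + s * ω)
    rw [hF]; dsimp only
    rw [hus, ← this]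
    simp
  have nrm : ∀ e : Fin n → ℝ, ‖((0 : ℝ), (0 : ℝ), e)‖ = ‖e‖ := fun e => by
    simp [Prod.norm_def]
  set D : (ℝ × ℝ × (Fin n → ℝ)) →L[ℝ] (ℝ × ℝ × (Fin n → ℝ)) :=
    (0 : (ℝ × ℝ × (Fin n → ℝ)) →L[ℝ] ℝ).prod
      ((0 : (ℝ × ℝ × (Fin n → ℝ)) →L[ℝ] ℝ).prod (fderiv ℝ F (t, x - ω * τ, u 0))) with hD
  have hDa : ∀ w, D w = (0, 0, fderiv ℝ F (t, x - ω * τ, u 0) w) := fun w => rfl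
  have main := hC (fun p => (1, ω, F p)) D τ (t, x - ω * τ, u 0)
    (t + τ / 2, x - ω * τ / 2, u (τ / 2)) (t + τ, x, u τ)
    (1, ω, iteratedDeriv 1 u 0) (0, 0, iteratedDeriv 2 u 0)
    (1, ω, iteratedDeriv 1 u (τ / 2)) (1, ω, iteratedDeriv 1 u τ) hτ (by linarith)
    ?_ ?_ ?_ ?_ ?_ ?_ ?_ ?_ ?_ ?_ ?_ ?_
  · have h2 : ∀ p : ℝ × ℝ × (Fin n → ℝ), ‖p.2.2‖ ≤ ‖p‖ := fun p =>
      (norm_snd_le p.2).trans (norm_snd_le p)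
    refine le_trans ?_ ((h2 _).trans main)
    have hd0 := hder 0 le_rfl hτ
    simp only [add_zero, zero_mul] at hd0
    have hu0 : u 0 = y (t, x - ω * τ) := by rw [hus]; simp
    have huτ : u τ = y (t + τ, x) := by rw [hus]; congr 2; ring
    rw [hd0, hu0, huτ]
    apply le_of_eq
    simp only [hF, Prod.fst_add, Prod.snd_add, Prod.fst_sub, Prod.snd_sub, Prod.smul_fst,
      Prod.smul_snd, smul_eq_mul]
    have i1 : t + τ / 2 * 1 = t + τ / 2 := by ring
    have i2 : x - ω * τ + τ / 2 * ω = x - ω * τ / 2 := by ring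
    have i3 : t - τ * 1 + 2 * τ * 1 = t + τ := by ring
    have i4 : x - ω * τ - τ * ω + 2 * τ * ω = x := by ring
    rw [i1, i2, i3, i4]
  · have := l3 1 (by norm_num) (by norm_num) 0
    have := abs_nonneg ω
    refine norm_prod_le_iff.2 ⟨?_, norm_prod_le_iff.2 ⟨?_, ?_⟩⟩
    · simp; linarith
    · simp; linarith
    · simp only; linarith
  · rw [nrm]
    have := l3 2 (by norm_num) (by norm_num) 0
    have := abs_nonneg ω
    linarith
  · refine D.opNorm_le_bound hB0 fun w => ?_
    rw [hDa, nrm]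
    exact (ContinuousLinearMap.le_opNorm _ _).trans (by gcongr; exact q1 _)
  · intro a b
    have : ((1 : ℝ), ω, F b) - (1, ω, F a) = (0, 0, F b - F a) := by simp
    rw [this, nrm]; exact q2 a b
  · intro a b
    have : ((1 : ℝ), ω, F b) - (1, ω, F a) - D (b - a) =
      (0, 0, F b - F a - fderiv ℝ F (t, x - ω * τ, u 0) (b - a)) := by rw [hDa]; simp
    rw [this, nrm]; exact q3 _ a b
  · have := hder 0 le_rfl hτ
    simp only [add_zero, zero_mul] at this
    rw [this]
  · have := hder (τ / 2) (by positivity) (by linarith)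
    have i2 : x - ω * τ + τ / 2 * ω = x - ω * τ / 2 := by ring
    rw [this, i2]
  · have := hder τ hτ le_rfl
    have i2 : x - ω * τ + τ * ω = x := by ring
    rw [this, i2]
  · have := aux_taylor3 u _ _ _ N hN0 c0 c1 c2 (l3 3 (by norm_num) (by norm_num)) (τ / 2)
      (by positivity)
    have e : ((t + τ / 2, x - ω * τ / 2, u (τ / 2)) - (t, x - ω * τ, u 0) -
      (τ / 2) • ((1 : ℝ), ω, iteratedDeriv 1 u 0) -
        (τ ^ 2 / 8) • ((0 : ℝ), (0 : ℝ), iteratedDeriv 2 u 0)) = ((0 : ℝ), (0 : ℝ),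
        u (τ / 2) - u 0 - (τ / 2) • iteratedDeriv 1 u 0 -
          ((τ / 2) ^ 2 / 2) • iteratedDeriv 2 u 0) := by
      ext1
      · simp
      · ext1
        · simp; ring
        · simp only [Prod.snd_sub, Prod.smul_snd]; module
    rw [e, nrm]
    refine this.trans ?_
    have : 0 ≤ N * τ ^ 3 := by positivity
    have : 0 ≤ |ω| * τ ^ 3 := by positivity
    have : 0 ≤ τ ^ 3 := by positivity
    linarith
  · have := aux_taylor3 u _ _ _ N hN0 c0 c1 c2 (l3 3 (by norm_num) (by norm_num)) τ hτ
    have e : ((t + τ, x, u τ) - (t, x - ω * τ, u 0) -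
      τ • ((1 : ℝ), ω, iteratedDeriv 1 u 0) -
        (τ ^ 2 / 2) • ((0 : ℝ), (0 : ℝ), iteratedDeriv 2 u 0)) = ((0 : ℝ), (0 : ℝ),
        u τ - u 0 - τ • iteratedDeriv 1 u 0 - (τ ^ 2 / 2) • iteratedDeriv 2 u 0) := by
      ext1
      · simp
      · ext1
        · simp; ring
        · simp only [Prod.snd_sub, Prod.smul_snd]
    rw [e, nrm]
    refine this.trans ?_
    have : 0 ≤ N * τ ^ 3 := by positivity
    have : 0 ≤ |ω| * τ ^ 3 := by positivity
    have : 0 ≤ τ ^ 3 := by positivity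
    linarith
  · have := aux_taylor2 _ _ _ N hN0 c1 c2 (l3 3 (by norm_num) (by norm_num)) (τ / 2)
      (by positivity)
    have e : ((1 : ℝ), ω, iteratedDeriv 1 u (τ / 2)) - (1, ω, iteratedDeriv 1 u 0) -
        (τ / 2) • ((0 : ℝ), (0 : ℝ), iteratedDeriv 2 u 0) = ((0 : ℝ), (0 : ℝ),
        iteratedDeriv 1 u (τ / 2) - iteratedDeriv 1 u 0 - (τ / 2) • iteratedDeriv 2 u 0) := by
      simp
    rw [e, nrm]
    refine this.trans ?_
    have : 0 ≤ N * τ ^ 2 := by positivity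
    have : 0 ≤ |ω| * τ ^ 2 := by positivity
    have : 0 ≤ τ ^ 2 := by positivity
    linarith
  · have := aux_simpson u _ _ _ _ N hN0 c0 c1 c2 c3 (l3 4 (by norm_num) (by norm_num)) τ hτ
    have e : ((t + τ, x, u τ) - (t, x - ω * τ, u 0) -
      (τ / 6) • (((1 : ℝ), ω, iteratedDeriv 1 u 0) +
        (4 : ℝ) • ((1 : ℝ), ω, iteratedDeriv 1 u (τ / 2)) + (1, ω, iteratedDeriv 1 u τ))) =
        ((0 : ℝ), (0 : ℝ), u τ - u 0 - (τ / 6) • (iteratedDeriv 1 u 0 +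
          (4 : ℝ) • iteratedDeriv 1 u (τ / 2) + iteratedDeriv 1 u τ)) := by
      ext1
      · simp; ring
      · ext1
        · simp; ring
        · simp only [Prod.snd_sub, Prod.smul_snd, Prod.snd_add]
    rw [e, nrm]
    refine this.trans ?_
    have : 0 ≤ |ω| * τ ^ 4 := by positivity
    have : 0 ≤ τ ^ 4 := by positivity
    linarith
end

section
/- Let T > 0, ω ∈ ℝ, let f : ℝ × ℝ × ℝⁿ → ℝⁿ be four-times continuously differentiable with all partial derivatives up to order four bounded, and let y : [0,T] × ℝ → ℝⁿ be a five-times continuously differentiable solution of ∂y/∂t + ω·∂y/∂x = f(t, x, y(t,x)) on [0,T] × ℝ with all partial derivatives up to order five bounded. Then there exists a constant C ≥ 0 such that for all t, τ with 0 ≤ t ≤ t + τ ≤ T and all x ∈ ℝ, setting Y_D = y(t, x − ωτ), k₁ = f(t, x − ωτ, Y_D), k₂ = f(t + τ/2, x − ωτ/2, Y_D + (τ/2)·k₁), k₃ = f(t + τ/2, x − ωτ/2, Y_D + (τ/2)·k₂), and k₄ = f(t + τ, x, Y_D + τ·k₃), one has ‖y(t+τ, x) − Y_D − (τ/6)·(k₁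 + 2k₂ + 2k₃ + k₄)‖_∞ ≤ C·τ⁵. In particular, the local truncation error of the semi-Lagrangian Runge–Kutta order-4 method, i.e. this one-step error divided by τ, is O(τ⁴). -/
open Asymptotics Filter

lemma rk_pow {ι : Type*} (h : ι → ℝ) (T : ℝ) (hh : ∀ i, 0 ≤ h i ∧ h i ≤ T) (j k : ℕ) (hjk : j ≤ k) :
    (fun i => h i ^ k) =O[⊤] fun i => h i ^ j := by
  obtain ⟨m, rfl⟩ := Nat.exists_eq_add_of_le hjk
  refine isBigO_top.2 ⟨T ^ m, fun i => ?_⟩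
  have := hh i
  rw [Real.norm_of_nonneg (pow_nonneg this.1 _), Real.norm_of_nonneg (pow_nonneg this.1 _), pow_add,
    mul_comm]
  gcongr
  · exact pow_nonneg this.1 _
  · exact this.1
  · exact this.2

lemma rk_up {ι V : Type*} [NormedAddCommGroup V] [NormedSpace ℝ V] {h : ι → ℝ} {T : ℝ}
    (hh : ∀ i, 0 ≤ h i ∧ h i ≤ T) {e : ι → V} {k : ℕ} (j : ℕ)
    (he : e =O[⊤] fun i => h i ^ k) (hjk : j ≤ k) : e =O[⊤] fun i => h i ^ j :=
  he.trans (rk_pow h T hh j k hjk)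

lemma rk_smul {ι V : Type*} [NormedAddCommGroup V] [NormedSpace ℝ V] {h : ι → ℝ} {e : ι → V} {k : ℕ}
    (c : ℝ) (m : ℕ) (he : e =O[⊤] fun i => h i ^ k) :
    (fun i => (c * h i ^ m) • e i) =O[⊤] fun i => h i ^ (m + k) := by
  have h1 : (fun i => c * h i ^ m) =O[⊤] fun i => h i ^ m := isBigO_const_mul_self c _ _
  have := h1.smul he
  refine this.congr_right fun i => ?_
  simp [pow_add]

lemma rk_clm {ι V : Type*} [NormedAddCommGroup V] [NormedSpace ℝ V] {h : ι → ℝ} {e : ι → V} {k m : ℕ}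
    {D : ι → V →L[ℝ] V} (hD : D =O[⊤] fun i => h i ^ m) (he : e =O[⊤] fun i => h i ^ k) :
    (fun i => D i (e i)) =O[⊤] fun i => h i ^ (m + k) := by
  have h1 : (fun i => D i (e i)) =O[⊤] fun i => ‖D i‖ * ‖e i‖ :=
    IsBigO.of_bound 1 (Eventually.of_forall fun i => by
      rw [Real.norm_of_nonneg (by positivity), one_mul]; exact (D i).le_opNorm _)
  refine h1.trans ((hD.norm_left.mul he.norm_left).congr_right fun i => ?_)
  simp [pow_add]

lemma rk_abs {ι V : Type*} [NormedAddCommGroup V] [NormedSpace ℝ V] (h : ι → ℝ) (T M : ℝ)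
    (hh : ∀ i, 0 ≤ h i ∧ h i ≤ T)
    (U1 U2 U3 U4 u0 um u1 d0 dm d1 k2 k3 k4 : ι → V) (Dm D1 : ι → V →L[ℝ] V)
    (hU2 : U2 =O[⊤] fun i => h i ^ 0) (hU3 : U3 =O[⊤] fun i => h i ^ 0)
    (hU4 : U4 =O[⊤] fun i => h i ^ 0)
    (hd0 : ∀ i, d0 i = U1 i)
    (hum : (fun i => um i - u0 i - ((h i / 2) • U1 i + (h i ^ 2 / 8) • U2 i + (h i ^ 3 / 48) • U3 i
      + (h i ^ 4 / 384) • U4 i)) =O[⊤] fun i => h i ^ 5)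
    (hu1 : (fun i => u1 i - u0 i - ((h i) • U1 i + (h i ^ 2 / 2) • U2 i + (h i ^ 3 / 6) • U3 i
      + (h i ^ 4 / 24) • U4 i)) =O[⊤] fun i => h i ^ 5)
    (hdm : (fun i => dm i - (U1 i + (h i / 2) • U2 i + (h i ^ 2 / 8) • U3 i + (h i ^ 3 / 48) • U4 i))
      =O[⊤] fun i => h i ^ 4)
    (hd1 : (fun i => d1 i - (U1 i + (h i) • U2 i + (h i ^ 2 / 2) • U3 i + (h i ^ 3 / 6) • U4 i))
      =O[⊤] fun i => h i ^ 4)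
    (hDm : Dm =O[⊤] fun i => h i ^ 0) (hD1 : D1 =O[⊤] fun i => h i ^ 0)
    (hDD : (fun i => D1 i - Dm i) =O[⊤] fun i => h i ^ 1)
    (h2 : ∀ i, ‖dm i - k2 i - Dm i (um i - u0 i - (h i / 2) • d0 i)‖ ≤
      M * ‖um i - u0 i - (h i / 2) • d0 i‖ ^ 2)
    (h3 : ∀ i, ‖dm i - k3 i - Dm i (um i - u0 i - (h i / 2) • k2 i)‖ ≤
      M * ‖um i - u0 i - (h i / 2) • k2 i‖ ^ 2)
    (h4 : ∀ i, ‖d1 i - k4 i - D1 i (u1 i - u0 i - (h i) • k3 i)‖ ≤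
      M * ‖u1 i - u0 i - (h i) • k3 i‖ ^ 2) :
    (fun i => u1 i - u0 i - (h i / 6) • (d0 i + (2 : ℝ) • k2 i + (2 : ℝ) • k3 i + k4 i))
      =O[⊤] fun i => h i ^ 5 := by
  obtain rfl : d0 = U1 := funext hd0
  have sq : ∀ (r a : ι → V), (∀ i, ‖r i‖ ≤ M * ‖a i‖ ^ 2) → a =O[⊤] (fun i => h i ^ 2) →
      r =O[⊤] fun i => h i ^ 4 := by
    intro r a hr ha
    have : r =O[⊤] fun i => ‖a i‖ ^ 2 := IsBigO.of_bound M (Eventually.of_forall fun i => by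
      rw [norm_pow, norm_norm]; exact hr i)
    refine this.trans ((ha.norm_left.pow 2).congr_right fun i => by ring)
  -- remainders
  generalize hRm : (fun i => um i - u0 i - ((h i / 2) • d0 i + (h i ^ 2 / 8) • U2 i
    + (h i ^ 3 / 48) • U3 i + (h i ^ 4 / 384) • U4 i)) = Rm at hum
  generalize hR1 : (fun i => u1 i - u0 i - ((h i) • d0 i + (h i ^ 2 / 2) • U2 i + (h i ^ 3 / 6) • U3 i
      + (h i ^ 4 / 24) • U4 i)) = R1 at hu1
  generalize hSm : (fun i => dm i - (d0 i + (h i / 2) • U2 i + (h i ^ 2 / 8) • U3 i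
    + (h i ^ 3 / 48) • U4 i)) = Sm at hdm
  generalize hS1 : (fun i => d1 i - (d0 i + (h i) • U2 i + (h i ^ 2 / 2) • U3 i
    + (h i ^ 3 / 6) • U4 i)) = S1 at hd1
  have eum : ∀ i, um i = u0 i + ((h i / 2) • d0 i + (h i ^ 2 / 8) • U2 i
    + (h i ^ 3 / 48) • U3 i + (h i ^ 4 / 384) • U4 i) + Rm i := by
    intro i; rw [← hRm]; module
  have eu1 : ∀ i, u1 i = u0 i + ((h i) • d0 i + (h i ^ 2 / 2) • U2 i + (h i ^ 3 / 6) • U3 i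
      + (h i ^ 4 / 24) • U4 i) + R1 i := by
    intro i; rw [← hR1]; module
  have edm : ∀ i, dm i = (d0 i + (h i / 2) • U2 i + (h i ^ 2 / 8) • U3 i
    + (h i ^ 3 / 48) • U4 i) + Sm i := by
    intro i; rw [← hSm]; module
  have ed1 : ∀ i, d1 i = (d0 i + (h i) • U2 i + (h i ^ 2 / 2) • U3 i
    + (h i ^ 3 / 6) • U4 i) + S1 i := by
    intro i; rw [← hS1]; module
  clear hRm hR1 hSm hS1
  -- generic term bound
  have tm : ∀ (e : ι → V) (k : ℕ) (c : ℝ) (m j : ℕ), e =O[⊤] (fun i => h i ^ k) → j ≤ m + k →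
      (fun i => (c * h i ^ m) • e i) =O[⊤] fun i => h i ^ j := fun e k c m j he hj =>
    rk_up hh j (rk_smul c m he) hj
  -- a2, b, c
  obtain ⟨a2, ha2⟩ : ∃ a : ι → V, a = fun i => um i - u0 i - (h i / 2) • d0 i := ⟨_, rfl⟩
  obtain ⟨b, hb⟩ : ∃ a : ι → V, a = fun i => um i - u0 i - (h i / 2) • dm i := ⟨_, rfl⟩
  obtain ⟨c, hc⟩ : ∃ a : ι → V, a = fun i => u1 i - u0 i - h i • dm i := ⟨_, rfl⟩
  have Oa2 : a2 =O[⊤] fun i => h i ^ 2 := by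
    refine ((((tm U2 0 (1/8) 2 2 hU2 (by norm_num)).add (tm U3 0 (1/48) 3 2 hU3 (by norm_num))).add
      (tm U4 0 (1/384) 4 2 hU4 (by norm_num))).add (rk_up hh 2 hum (by norm_num))).congr_left ?_
    intro i; simp only [ha2, eum]; module
  have Ob : b =O[⊤] fun i => h i ^ 2 := by
    refine (((((tm U2 0 (1/8-1/4) 2 2 hU2 (by norm_num)).add
      (tm U3 0 (1/48-1/16) 3 2 hU3 (by norm_num))).add
      (tm U4 0 (1/384-1/96) 4 2 hU4 (by norm_num))).add (rk_up hh 2 hum (by norm_num))).add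
      (tm Sm 4 (-1/2) 1 2 hdm (by norm_num))).congr_left ?_
    intro i; simp only [hb, eum, edm]; module
  have Oc : c =O[⊤] fun i => h i ^ 3 := by
    refine ((((tm U3 0 (1/6-1/8) 3 3 hU3 (by norm_num)).add
      (tm U4 0 (1/24-1/48) 4 3 hU4 (by norm_num))).add (rk_up hh 3 hu1 (by norm_num))).add
      (tm Sm 4 (-1) 1 3 hdm (by norm_num))).congr_left ?_
    intro i; simp only [hc, eu1, edm]; module
  have Oab : (fun i => a2 i + b i) =O[⊤] fun i => h i ^ 3 := by
    refine ((((tm U3 0 (1/24-1/16) 3 3 hU3 (by norm_num)).add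
      (tm U4 0 (1/192-1/96) 4 3 hU4 (by norm_num))).add (tm Rm 5 2 0 3 hum (by norm_num))).add
      (tm Sm 4 (-1/2) 1 3 hdm (by norm_num))).congr_left ?_
    intro i; simp only [ha2, hb, eum, edm]; module
  have Oabc : (fun i => (2:ℝ) • a2 i + (2:ℝ) • b i + c i) =O[⊤] fun i => h i ^ 4 := by
    refine ((((tm U4 0 (1/96-1/48 + 1/24-1/48) 4 4 hU4 (by norm_num))).add
      (tm Rm 5 4 0 4 hum (by norm_num))).add (tm R1 5 1 0 4 hu1 (by norm_num))|>.add
      (tm Sm 4 (-2) 1 4 hdm (by norm_num))).congr_left ?_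
    intro i; simp only [ha2, hb, hc, eum, edm, eu1]; module
  have Osimp : (fun i => u1 i - u0 i - (h i / 6) • (d0 i + (4:ℝ) • dm i + d1 i)) =O[⊤]
      fun i => h i ^ 5 := by
    refine (hu1.add (tm Sm 4 (-4/6) 1 5 hdm (by norm_num))|>.add
      (tm S1 4 (-1/6) 1 5 hd1 (by norm_num))).congr_left ?_
    intro i; simp only [eu1, edm, ed1]; module
  clear eum eu1 edm ed1 hum hu1 hdm hd1 hU2 hU3 hU4
  obtain ⟨r2, hr2⟩ : ∃ r : ι → V, r = fun i => dm i - k2 i - Dm i (a2 i) := ⟨_, rfl⟩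
  have Or2 : r2 =O[⊤] fun i => h i ^ 4 := sq r2 a2 (by rw [hr2, ha2]; exact h2) Oa2
  have ek2 : ∀ i, k2 i = dm i - Dm i (a2 i) - r2 i := by intro i; rw [hr2]; module
  obtain ⟨a3, ha3⟩ : ∃ a : ι → V, a = fun i => um i - u0 i - (h i / 2) • k2 i := ⟨_, rfl⟩
  have ea3 : ∀ i, a3 i = b i + (h i / 2) • (Dm i (a2 i) + r2 i) := by
    intro i; simp only [ha3, hb, ek2]; module
  have Oa3 : a3 =O[⊤] fun i => h i ^ 2 := by
    refine ((Ob.add (tm _ _ (1/2) 1 2 (rk_clm hDm Oa2) (by norm_num))).add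
      (tm _ _ (1/2) 1 2 Or2 (by norm_num))).congr_left ?_
    intro i; rw [ea3]; module
  obtain ⟨r3, hr3⟩ : ∃ r : ι → V, r = fun i => dm i - k3 i - Dm i (a3 i) := ⟨_, rfl⟩
  have Or3 : r3 =O[⊤] fun i => h i ^ 4 := sq r3 a3 (by rw [hr3, ha3]; exact h3) Oa3
  have ek3 : ∀ i, k3 i = dm i - Dm i (a3 i) - r3 i := by intro i; rw [hr3]; module
  obtain ⟨a4, ha4⟩ : ∃ a : ι → V, a = fun i => u1 i - u0 i - (h i) • k3 i := ⟨_, rfl⟩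
  have ea4 : ∀ i, a4 i = c i + (h i) • (Dm i (a3 i) + r3 i) := by
    intro i; simp only [ha4, hc, ek3]; module
  have Oa4 : a4 =O[⊤] fun i => h i ^ 2 := by
    refine (((rk_up hh 2 Oc (by norm_num)).add (tm _ _ 1 1 2 (rk_clm hDm Oa3) (by norm_num))).add
      (tm _ _ 1 1 2 Or3 (by norm_num))).congr_left ?_
    intro i; rw [ea4]; module
  obtain ⟨r4, hr4⟩ : ∃ r : ι → V, r = fun i => d1 i - k4 i - D1 i (a4 i) := ⟨_, rfl⟩
  have Or4 : r4 =O[⊤] fun i => h i ^ 4 := sq r4 a4 (by rw [hr4, ha4]; exact h4) Oa4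
  have ek4 : ∀ i, k4 i = d1 i - D1 i (a4 i) - r4 i := by intro i; rw [hr4]; module
  have Osum : (fun i => (2:ℝ) • (dm i - k2 i) + (2:ℝ) • (dm i - k3 i) + (d1 i - k4 i)) =O[⊤]
      fun i => h i ^ 4 := by
    have t1 := tm _ _ 2 0 4 Or2 (by norm_num)
    have t2 := tm _ _ 2 0 4 Or3 (by norm_num)
    have t3 := tm _ _ 1 0 4 Or4 (by norm_num)
    have t4 := tm _ _ 1 0 4 (rk_clm hDm Oabc) (by norm_num)
    have t5 := tm _ _ 1 0 4 (rk_clm hDD Oc) (by norm_num)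
    have t6 := tm _ _ 1 1 4 (rk_clm hDm (rk_clm hDm Oab)) (by norm_num)
    have t7 := tm _ _ 1 1 4 (rk_clm hDm Or2) (by norm_num)
    have t8 := tm _ _ 1 1 4 (rk_clm hD1 Or3) (by norm_num)
    have t9 := tm _ _ 1 1 4 (rk_clm hDD (rk_clm hDm Oa3)) (by norm_num)
    have t10 := tm _ _ (1/2) 2 4 (rk_clm hDm (rk_clm hDm (rk_clm hDm Oa2))) (by norm_num)
    have t11 := tm _ _ (1/2) 2 4 (rk_clm hDm (rk_clm hDm Or2)) (by norm_num)
    refine ((((((((((t1.add t2).add t3).add t4).add t5).add t6).add t7).add t8).add t9).add t10).add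
      t11).congr_left ?_
    intro i
    simp only [ek2, ek3, ek4, ea4, ea3, map_add, map_smul, _root_.sub_apply, smul_add,
      smul_sub]
    module
  refine (Osimp.add (tm _ _ (1/6) 1 5 Osum (by norm_num))).congr_left ?_
  intro i; module

lemma rk_taylor {V : Type*} [NormedAddCommGroup V] [NormedSpace ℝ V] (u : ℝ → V) (m : ℕ) (B : ℝ)
    (hu : ContDiff ℝ (m + 1) u) (hB : ∀ s, ‖iteratedDeriv (m + 1) u s‖ ≤ B) (h : ℝ) (hh : 0 ≤ h) :
    ‖u h - ∑ k ∈ Finset.range (m + 1), ((k.factorial : ℝ)⁻¹ * h ^ k) • iteratedDeriv k u 0‖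
      ≤ B * h ^ (m + 1) := by
  have hB0 : 0 ≤ B := (norm_nonneg _).trans (hB 0)
  have hs : UniqueDiffOn ℝ (Set.Icc (0:ℝ) (h + 1)) := uniqueDiffOn_Icc (by linarith)
  have key := taylor_mean_remainder_bound (f := u) (a := 0) (b := h + 1) (C := B) (x := h) (n := m)
    (by linarith) hu.contDiffOn ⟨hh, by linarith⟩ (fun s hs' => by
      rw [iteratedDerivWithin_eq_iteratedDeriv hs (by exact_mod_cast hu.contDiffAt) hs']
      exact hB s)
  rw [taylor_within_apply] at key
  have e : ∀ k ∈ Finset.range (m + 1), ((k.factorial : ℝ)⁻¹ * (h - 0) ^ k) •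
      iteratedDerivWithin k u (Set.Icc 0 (h + 1)) 0 =
      ((k.factorial : ℝ)⁻¹ * h ^ k) • iteratedDeriv k u 0 := by
    intro k hk
    rw [sub_zero, iteratedDerivWithin_eq_iteratedDeriv hs (hu.contDiffAt.of_le ?_) ⟨le_rfl, by linarith⟩]
    have := Finset.mem_range.1 hk
    exact_mod_cast this.le
  rw [Finset.sum_congr rfl e, sub_zero] at key
  refine key.trans (div_le_self (by positivity) ?_)
  exact_mod_cast Nat.one_le_iff_ne_zero.2 (Nat.factorial_ne_zero m)

lemma rk_line {V E : Type*} [NormedAddCommGroup V] [NormedSpace ℝ V] [NormedAddCommGroup E]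
    [NormedSpace ℝ E] (y : E → V) (N : ℕ) (hy : ContDiff ℝ N y) (p v : E) (k : ℕ) (hk : k ≤ N) (B : ℝ)
    (hB : ∀ q, ‖iteratedFDeriv ℝ k y q‖ ≤ B) (s : ℝ) :
    ‖iteratedDeriv k (fun s : ℝ => y (p + s • v)) s‖ ≤ B * ‖v‖ ^ k := by
  have h1 : ContDiff ℝ N (fun z => y (p + z)) := hy.comp (by fun_prop)
  have h2 := ContinuousLinearMap.iteratedFDeriv_comp_right
    (ContinuousLinearMap.toSpanSingleton ℝ v) h1 s (i := k) (by exact_mod_cast hk)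
  have h3 : (fun s : ℝ => y (p + s • v)) =
      (fun z => y (p + z)) ∘ (ContinuousLinearMap.toSpanSingleton ℝ v) := by
    ext s; simp
  rw [iteratedDeriv_eq_iteratedFDeriv, h3, h2, iteratedFDeriv_comp_add_left]
  rw [ContinuousMultilinearMap.compContinuousLinearMap_apply]
  refine (ContinuousMultilinearMap.le_opNorm _ _).trans ?_
  simp only [ContinuousLinearMap.toSpanSingleton_apply, one_smul, Finset.prod_const, Finset.card_univ,
    Fintype.card_fin]
  gcongr
  exact hB _

lemma rk_lip {V E : Type*} [NormedAddCommGroup V] [NormedSpace ℝ V] [NormedAddCommGroup E]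
    [NormedSpace ℝ E] (y : E → V) (hy : Differentiable ℝ y) (B : ℝ)
    (hB : ∀ q, ‖iteratedFDeriv ℝ 1 y q‖ ≤ B) (p q : E) : ‖y p - y q‖ ≤ B * ‖p - q‖ :=
  Convex.norm_image_sub_le_of_norm_fderiv_le (𝕜 := ℝ) (s := Set.univ) (fun x _ => hy x)
    (fun x _ => by rw [← norm_iteratedFDeriv_one]; exact hB x) convex_univ trivial trivial

lemma rk_quad {V E : Type*} [NormedAddCommGroup V] [NormedSpace ℝ V] [NormedAddCommGroup E]
    [NormedSpace ℝ E] (F : E → V) (hF : ContDiff ℝ 2 F) (B : ℝ)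
    (hB : ∀ q, ‖iteratedFDeriv ℝ 2 F q‖ ≤ B) :
    (∀ p q, ‖fderiv ℝ F p - fderiv ℝ F q‖ ≤ B * ‖p - q‖) ∧
    ∀ p q, ‖F p - F q - fderiv ℝ F p (p - q)‖ ≤ B * ‖p - q‖ ^ 2 := by
  have hB0 : 0 ≤ B := (norm_nonneg _).trans (hB 0)
  have h1 : ∀ p q, ‖fderiv ℝ F p - fderiv ℝ F q‖ ≤ B * ‖p - q‖ :=
    rk_lip _ ((hF.fderiv_right (m := 1) (by norm_num)).differentiable (by norm_num)) B
      (fun q => by rw [norm_iteratedFDeriv_fderiv]; exact hB q)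
  refine ⟨h1, fun p q => ?_⟩
  have := Convex.norm_image_sub_le_of_norm_fderiv_le' (𝕜 := ℝ) (f := F) (φ := fderiv ℝ F p)
    (s := Metric.closedBall p ‖p - q‖) (C := B * ‖p - q‖) (x := q) (y := p)
    (fun x _ => hF.differentiable (by norm_num) x)
    (fun x hx => (h1 x p).trans (by gcongr; simpa [dist_eq_norm] using hx)) (convex_closedBall _ _)
    (by simp [dist_eq_norm, norm_sub_rev]) (by simp)
  exact this.trans (by rw [mul_assoc, sq])

theorem stmt_13 (n : ℕ) (T ω : ℝ) (hT : 0 < T)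
    (f : ℝ → ℝ → (Fin n → ℝ) → (Fin n → ℝ))
    (hf : ContDiff ℝ 4 fun p : ℝ × ℝ × (Fin n → ℝ) => f p.1 p.2.1 p.2.2)
    (hfb : ∃ B : ℝ, ∀ j : ℕ, 1 ≤ j → j ≤ 4 → ∀ p : ℝ × ℝ × (Fin n → ℝ),
      ‖iteratedFDeriv ℝ j (fun q : ℝ × ℝ × (Fin n → ℝ) => f q.1 q.2.1 q.2.2) p‖ ≤ B)
    (y : ℝ × ℝ → (Fin n → ℝ))
    (hy : ContDiff ℝ 5 y)
    (hyb : ∃ B : ℝ, ∀ j : ℕ, 1 ≤ j → j ≤ 5 → ∀ p : ℝ × ℝ,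
      ‖iteratedFDeriv ℝ j y p‖ ≤ B)
    (hpde : ∀ t ∈ Set.Icc (0 : ℝ) T, ∀ x : ℝ,
      fderiv ℝ y (t, x) (1, ω) = f t x (y (t, x))) :
    ∃ C : ℝ, 0 ≤ C ∧ ∀ (t τ x : ℝ), 0 ≤ t → 0 ≤ τ → t + τ ≤ T →
      let YD := y (t, x - ω * τ)
      let k₁ := f t (x - ω * τ) YD
      let k₂ := f (t + τ / 2) (x - ω * τ / 2) (YD + (τ / 2) • k₁)
      let k₃ := f (t + τ / 2) (x - ω * τ / 2) (YD + (τ / 2) • k₂)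
      let k₄ := f (t + τ) x (YD + τ • k₃)
      ‖y (t + τ, x) - YD
          - (τ / 6) • (k₁ + (2 : ℝ) • k₂ + (2 : ℝ) • k₃ + k₄)‖ ≤ C * τ ^ 5 := by
  obtain ⟨B, hB⟩ := hfb
  obtain ⟨A, hA⟩ := hyb
  generalize hFdef : (fun q : ℝ × ℝ × (Fin n → ℝ) => f q.1 q.2.1 q.2.2) = F at hf hB
  have hfF : ∀ a b c, f a b c = F (a, b, c) := by intro a b c; rw [← hFdef]
  simp only [hfF] at hpde ⊢
  clear hFdef hfF f
  let ι := {q : ℝ × ℝ × ℝ // 0 ≤ q.1 ∧ 0 ≤ q.2.1 ∧ q.1 + q.2.1 ≤ T}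
  let t : ι → ℝ := fun i => i.1.1
  let h : ι → ℝ := fun i => i.1.2.1
  let x : ι → ℝ := fun i => i.1.2.2
  have hh : ∀ i, 0 ≤ h i ∧ h i ≤ T := fun i => ⟨i.2.2.1, by
    have h1 := i.2.1
    have h2 := i.2.2.2
    change i.1.2.1 ≤ T
    linarith⟩
  let v : ℝ × ℝ := (1, ω)
  let p : ι → ℝ × ℝ := fun i => (t i, x i - ω * h i)
  let u : ι → ℝ → (Fin n → ℝ) := fun i s => y (p i + s • v)
  have hu : ∀ i, ContDiff ℝ 5 (u i) := fun i => hy.comp (by fun_prop)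
  have hub : ∀ i k, 1 ≤ k → k ≤ 5 → ∀ s, ‖iteratedDeriv k (u i) s‖ ≤ A * ‖v‖ ^ k :=
    fun i k h1 h5 s => rk_line y 5 hy (p i) v k h5 A (hA k h1 h5) s
  let U : ℕ → ι → (Fin n → ℝ) := fun k i => iteratedDeriv k (u i) 0
  have hU : ∀ k, 1 ≤ k → k ≤ 5 → U k =O[⊤] fun i => h i ^ 0 := fun k h1 h5 =>
    isBigO_top.2 ⟨A * ‖v‖ ^ k, fun i => by simpa using hub i k h1 h5 0⟩
  have hdu : ∀ i s, deriv (u i) s = fderiv ℝ y (p i + s • v) v := by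
    intro i s
    have h1 : HasDerivAt (fun s : ℝ => p i + s • v) v s := by
      simpa using ((hasDerivAt_id s).smul_const v).const_add (p i)
    exact ((hy.differentiable (by norm_num) _).hasFDerivAt.comp_hasDerivAt s h1).deriv
  have hps : ∀ i s, p i + s • v = (t i + s, x i - ω * h i + ω * s) := by
    intro i s; simp [p, v, mul_comm]
  have hode : ∀ i s, 0 ≤ s → s ≤ h i →
      deriv (u i) s = F (t i + s, x i - ω * h i + ω * s, u i s) := by
    intro i s h0 h1
    rw [hdu]
    simp only [u]
    rw [hps]
    refine hpde _ ⟨add_nonneg i.2.1 h0, ?_⟩ _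
    have h2 : t i + h i ≤ T := i.2.2.2
    linarith
  have T0 : ∀ i (s : ℝ), 0 ≤ s → ‖u i s - (u i 0 + s • U 1 i + (s ^ 2 / 2) • U 2 i
      + (s ^ 3 / 6) • U 3 i + (s ^ 4 / 24) • U 4 i)‖ ≤ A * ‖v‖ ^ 5 * s ^ 5 := by
    intro i s hs
    have := rk_taylor (u i) 4 _ (by exact_mod_cast hu i) (hub i 5 (by norm_num) le_rfl) s hs
    refine le_trans (le_of_eq ?_) this
    congr 2
    simp only [Finset.sum_range_succ, Finset.sum_range_zero, U, iteratedDeriv_zero]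
    norm_num [Nat.factorial]
    module
  have T1 : ∀ i (s : ℝ), 0 ≤ s → ‖deriv (u i) s - (U 1 i + s • U 2 i
      + (s ^ 2 / 2) • U 3 i + (s ^ 3 / 6) • U 4 i)‖ ≤ A * ‖v‖ ^ 5 * s ^ 4 := by
    intro i s hs
    have hd : ContDiff ℝ 4 (deriv (u i)) := by
      have : ContDiff ℝ (4 + 1) (u i) := by norm_num; exact hu i
      exact (contDiff_succ_iff_deriv.1 this).2.2
    have := rk_taylor (deriv (u i)) 3 (A * ‖v‖ ^ 5) (by norm_num; exact hd) (fun s => by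
      rw [← iteratedDeriv_succ']; exact hub i 5 (by norm_num) le_rfl s) s hs
    refine le_trans (le_of_eq ?_) this
    congr 2
    simp only [Finset.sum_range_succ, Finset.sum_range_zero, U, ← iteratedDeriv_succ']
    norm_num [Nat.factorial]
    module
  obtain ⟨L1, L2⟩ := rk_quad F (hf.of_le (by norm_num)) B (hB 2 (by norm_num) (by norm_num))
  have LB : ∀ q, ‖fderiv ℝ F q‖ ≤ B := fun q => by
    rw [← norm_iteratedFDeriv_one]; exact hB 1 le_rfl (by norm_num) q
  have hB0 : 0 ≤ B := (norm_nonneg _).trans (LB 0)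
  have hA0 : 0 ≤ A := (norm_nonneg _).trans (hA 1 le_rfl (by norm_num) 0)
  let J : (Fin n → ℝ) →L[ℝ] ℝ × ℝ × (Fin n → ℝ) :=
    (ContinuousLinearMap.inr ℝ ℝ (ℝ × (Fin n → ℝ))).comp (ContinuousLinearMap.inr ℝ ℝ (Fin n → ℝ))
  have hJ : ∀ z, J z = (0, 0, z) := fun z => by simp [J]
  have hJn : ∀ z, ‖J z‖ = ‖z‖ := fun z => by simp [hJ, Prod.norm_def]
  have hJ1 : ‖J‖ ≤ 1 := J.opNorm_le_bound zero_le_one (fun z => by rw [hJn, one_mul])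
  -- stage points
  let Pm : ι → ℝ × ℝ × (Fin n → ℝ) := fun i => (t i + h i / 2, x i - ω * h i / 2, u i (h i / 2))
  let P1 : ι → ℝ × ℝ × (Fin n → ℝ) := fun i => (t i + h i, x i, u i (h i))
  let k1 : ι → (Fin n → ℝ) := fun i => F (t i, x i - ω * h i, u i 0)
  let k2 : ι → (Fin n → ℝ) := fun i =>
    F (t i + h i / 2, x i - ω * h i / 2, u i 0 + (h i / 2) • k1 i)
  let k3 : ι → (Fin n → ℝ) := fun i =>
    F (t i + h i / 2, x i - ω * h i / 2, u i 0 + (h i / 2) • k2 i)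
  let k4 : ι → (Fin n → ℝ) := fun i => F (t i + h i, x i, u i 0 + (h i) • k3 i)
  have e0 : ∀ i, k1 i = deriv (u i) 0 := fun i => by
    rw [hode i 0 le_rfl (hh i).1]; simp [k1]
  have em : ∀ i, F (Pm i) = deriv (u i) (h i / 2) := fun i => by
    have := hh i
    rw [hode i (h i / 2) (by linarith) (by linarith)]
    simp only [Pm]; congr 3; ring
  have e1 : ∀ i, F (P1 i) = deriv (u i) (h i) := fun i => by
    rw [hode i (h i) (hh i).1 le_rfl]
    simp only [P1]; congr 3; ring
  have stage : ∀ (a b : ℝ) (w z : Fin n → ℝ),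
      ‖F (a, b, w) - F (a, b, z) - ((fderiv ℝ F (a, b, w)).comp J) (w - z)‖ ≤ B * ‖w - z‖ ^ 2 := by
    intro a b w z
    have := L2 (a, b, w) (a, b, z)
    have e : ((a, b, w) : ℝ × ℝ × (Fin n → ℝ)) - (a, b, z) = J (w - z) := by simp [hJ]
    rwa [e, hJn] at this
  have clmb : ∀ D : (ℝ × ℝ × (Fin n → ℝ)) →L[ℝ] (Fin n → ℝ), ‖D.comp J‖ ≤ ‖D‖ := fun D =>
    (D.opNorm_comp_le J).trans (mul_le_of_le_one_right (norm_nonneg _) hJ1)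
  have main := rk_abs h T B hh (U 1) (U 2) (U 3) (U 4) (fun i => u i 0) (fun i => u i (h i / 2))
    (fun i => u i (h i)) k1 (fun i => F (Pm i)) (fun i => F (P1 i)) k2 k3 k4
    (fun i => (fderiv ℝ F (Pm i)).comp J) (fun i => (fderiv ℝ F (P1 i)).comp J)
    (hU 2 (by norm_num) (by norm_num)) (hU 3 (by norm_num) (by norm_num))
    (hU 4 (by norm_num) (by norm_num)) (fun i => by rw [e0]; simp [U])
    (isBigO_top.2 ⟨A * ‖v‖ ^ 5, fun i => by
      have h0 := (hh i).1
      have := T0 i (h i / 2) (by linarith)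
      rw [Real.norm_of_nonneg (by positivity)]
      refine le_trans (le_of_eq ?_) (this.trans ?_)
      · congr 1; module
      · gcongr; linarith⟩)
    (isBigO_top.2 ⟨A * ‖v‖ ^ 5, fun i => by
      have h0 := (hh i).1
      have := T0 i (h i) h0
      rw [Real.norm_of_nonneg (by positivity)]
      refine le_trans (le_of_eq ?_) this
      congr 1; module⟩)
    (isBigO_top.2 ⟨A * ‖v‖ ^ 5, fun i => by
      have h0 := (hh i).1
      have := T1 i (h i / 2) (by linarith)
      rw [Real.norm_of_nonneg (by positivity), em]
      refine le_trans (le_of_eq ?_) (this.trans ?_)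
      · congr 1; module
      · gcongr; linarith⟩)
    (isBigO_top.2 ⟨A * ‖v‖ ^ 5, fun i => by
      have h0 := (hh i).1
      have := T1 i (h i) h0
      rw [Real.norm_of_nonneg (by positivity), e1]
      exact this⟩)
    (isBigO_top.2 ⟨B, fun i => by simpa using (clmb _).trans (LB _)⟩)
    (isBigO_top.2 ⟨B, fun i => by simpa using (clmb _).trans (LB _)⟩)
    (isBigO_top.2 ⟨B * (1 + |ω| + A * ‖v‖), fun i => by
      have h0 := (hh i).1
      rw [← ContinuousLinearMap.sub_comp, pow_one, Real.norm_of_nonneg h0]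
      refine (clmb _).trans ((L1 _ _).trans ?_)
      rw [mul_assoc]
      gcongr
      have hl : ‖u i (h i) - u i (h i / 2)‖ ≤ A * ‖v‖ * h i := by
        have := rk_lip y (hy.differentiable (by norm_num)) A (hA 1 le_rfl (by norm_num))
          (p i + h i • v) (p i + (h i / 2) • v)
        refine this.trans ?_
        have e : p i + h i • v - (p i + (h i / 2) • v) = (h i / 2) • v := by module
        rw [e, norm_smul, Real.norm_of_nonneg (by linarith), mul_assoc, mul_comm ‖v‖]
        gcongr; linarith
      have e : P1 i - Pm i = (h i / 2, ω * h i / 2, u i (h i) - u i (h i / 2)) := by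
        simp only [P1, Pm, Prod.mk_sub_mk]
        congr 2 <;> ring_nf
      have hv0 : 0 ≤ A * ‖v‖ * h i := by positivity
      have hw0 : 0 ≤ |ω| * h i := by positivity
      rw [e, Prod.norm_def, Prod.norm_def]
      refine max_le ?_ (max_le ?_ ?_)
      · change ‖h i / 2‖ ≤ _
        rw [Real.norm_of_nonneg (by linarith)]; linarith
      · change ‖ω * h i / 2‖ ≤ _
        rw [Real.norm_eq_abs, abs_div, abs_mul, abs_of_nonneg h0, abs_two]; linarith
      · change ‖u i (h i) - u i (h i / 2)‖ ≤ _
        linarith⟩)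
    (fun i => by rw [sub_sub (u i (h i / 2))]; exact stage _ _ _ _)
    (fun i => by rw [sub_sub (u i (h i / 2))]; exact stage _ _ _ _)
    (fun i => by rw [sub_sub (u i (h i))]; exact stage _ _ _ _)
  obtain ⟨C, hC⟩ := isBigO_top.1 main
  refine ⟨max C 0, le_max_right _ _, fun t' τ x' ht hτ htT => ?_⟩
  have key := hC ⟨(t', τ, x'), ht, hτ, htT⟩
  rw [Real.norm_of_nonneg (pow_nonneg hτ 5)] at key
  have key2 := key.trans (mul_le_mul_of_nonneg_right (le_max_left C 0) (pow_nonneg hτ 5))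
  have a0 : ((t', x' - ω * τ) : ℝ × ℝ) + (0 : ℝ) • v = (t', x' - ω * τ) := by simp
  have a1 : ((t', x' - ω * τ) : ℝ × ℝ) + τ • v = (t' + τ, x') := by simp [v, mul_comm]
  simp only [k4, k3, k2, k1, u, p, t, h, x, a0, a1] at key2
  exact key2
end
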